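/- Let x₀ ∈ ℝ², r > 0 and γ ∈ ℝ, and let z(α) = x₀ + r·(cos 2πα, sin 2πα) for α ∈ [0,1]. Define v(x) = 2πr·γ·∫₀¹ K₂( x − z(α) ) dα for x ∉ z([0,1]). Then v(x) = 0 whenever |x − x₀| < r, and v(x) = r·γ·(x − x₀)^⊥ / |x − x₀|² whenever |x − x₀| > r. -/

import Mathlib

open MeasureTheory Real Set Filter Metric Function Topology

noncomputable section

abbrev E2 := EuclideanSpace ℝ (Fin 2)

def perp2 (x : E2) : E2 := (WithLp.equiv 2 (Fin 2 → ℝ)).symm ![-(x 1), x 0]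

def K2 (x : E2) : E2 := (2 * π * ‖x‖ ^ 2)⁻¹ • perp2 x

def dS (cc : Bool) (α β : ℝ) : ℝ := if cc then min |α - β| (1 - |α - β|) else |α - β|

def nv (z : ℝ → E2) (L α : ℝ) : E2 := L⁻¹ • perp2 (deriv z α)

def Rm (z : ℝ → E2) (γ : ℝ → ℝ) (L ε α η : ℝ) : E2 :=
  z α + (ε * γ α * η) • nv z L α

def Dset (cc : Bool) (z : ℝ → E2) (γ : ℝ → ℝ) (L ε : ℝ) : Set E2 :=
  {x | ∃ α ∈ (if cc then Icc (0:ℝ) 1 else Ioo (0:ℝ) 1), ∃ η ∈ Ioo (-1:ℝ) 0,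
    x = Rm z γ L ε α η}

def e2 (i : Fin 2) : E2 := EuclideanSpace.single i (1:ℝ)

def lap (v : E2 → ℝ) (x : E2) : ℝ :=
  fderiv ℝ (fun y => fderiv ℝ v y (e2 0)) x (e2 0) +
  fderiv ℝ (fun y => fderiv ℝ v y (e2 1)) x (e2 1)

/- STATEMENT 18 -/
def circ (x₀ : E2) (r α : ℝ) : E2 :=
  x₀ + (WithLp.equiv 2 (Fin 2 → ℝ)).symm ![r * Real.cos (2 * π * α), r * Real.sin (2 * π * α)]

/-! Under `ℂ ≃ ℝ²` the kernel `K₂` has complex velocity `u - i v = 1 / (2π i z)`, so the velocity of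
the sheet is governed by the average of `z ↦ (w - z)⁻¹` over the circle. For `w` outside the circle
this function is holomorphic in the closed disc and the mean value property gives its value at the
centre. For `w` inside, the substitution `z ↦ z⁻¹` on the normalized unit circle, which preserves
averages, turns it into a function holomorphic in the closed disc and vanishing at the centre. -/

section CircleAverage

variable {c w : ℂ} {R : ℝ}

lemma circleAverage_inv_sub_of_notMem_closedBall (hw : w ∉ closedBall c |R|) :
    circleAverage (fun z ↦ (w - z)⁻¹) c R = (w - c)⁻¹ := by
  have hdiff : DifferentiableOn ℂ (fun z ↦ (w - z)⁻¹) (closedBall c |R|) :=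
    DifferentiableOn.inv (by fun_prop) fun z hz ↦ sub_ne_zero.2 (ne_of_mem_of_not_mem hz hw).symm
  exact (hdiff.diffContOnCl_ball le_rfl).circleAverage

lemma circleAverage_inv_sub_of_mem_ball (hw : w ∈ ball c |R|) :
    circleAverage (fun z ↦ (w - z)⁻¹) c R = 0 := by
  have hden : ∀ z ∈ closedBall (0 : ℂ) |1|, (w - c) * z - R ≠ 0 := by
    intro z hz hzero
    have hz_norm : ‖z‖ ≤ 1 := by simpa using hz
    have hw_norm : ‖w - c‖ < |R| := mem_ball_iff_norm.1 hw
    have hR : ‖w - c‖ * ‖z‖ = |R| := by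
      rw [← norm_mul, sub_eq_zero.1 hzero, Complex.norm_real, norm_eq_abs]
    linarith [mul_le_of_le_one_right (norm_nonneg (w - c)) hz_norm]
  have hdiff : DifferentiableOn ℂ (fun z ↦ z / ((w - c) * z - R)) (closedBall 0 |1|) :=
    DifferentiableOn.div (by fun_prop) (by fun_prop) hden
  have hinv : EqOn (fun z : ℂ ↦ (w - (R * z⁻¹ + c))⁻¹) (fun z ↦ z / ((w - c) * z - R))
      (sphere 0 |1|) := by
    intro z hz
    have hz₀ : z ≠ 0 := ne_of_mem_sphere hz (by simp)
    have hsplit : w - (R * z⁻¹ + c) = ((w - c) * z - R) / z := by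
      field_simp
      ring
    simp only [hsplit, inv_div]
  calc circleAverage (fun z ↦ (w - z)⁻¹) c R
      = circleAverage (fun z ↦ (w - (R * z + c))⁻¹) 0 1 := circleAverage_eq_circleAverage_zero_one
    _ = circleAverage (fun z ↦ (w - (R * z⁻¹ + c))⁻¹) 0 1 := circleAverage_zero_one_congr_inv.symm
    _ = circleAverage (fun z ↦ z / ((w - c) * z - R)) 0 1 := circleAverage_congr_sphere hinv
    _ = 0 := by simpa using (hdiff.diffContOnCl_ball le_rfl).circleAverage

lemma circleIntegrable_inv_sub (hw : w ∉ sphere c |R|) :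
    CircleIntegrable (fun z ↦ (w - z)⁻¹) c R := by
  simpa only [Pi.neg_def, ← inv_neg, neg_sub] using
    (circleIntegrable_sub_inv_iff.2 (.inr hw)).neg

end CircleAverage

/-- The identification `a + b i ↦ (a, b)` of the complex plane with `ℝ²`. -/
abbrev planeOfComplex : ℂ ≃ₗᵢ[ℝ] E2 := Complex.orthonormalBasisOneI.repr

/-- The vector `(u, v)` of a planar flow as a function of its complex velocity `u - i v`, the
quantity that is holomorphic where the flow is divergence-free and irrotational. -/
def velocityOfComplex : ℂ →L[ℝ] E2 :=
  (Complex.conjLIE.trans planeOfComplex).toContinuousLinearEquiv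

lemma velocityOfComplex_apply (z : ℂ) :
    velocityOfComplex z = planeOfComplex (starRingEnd ℂ z) := rfl

lemma perp2_planeOfComplex (z : ℂ) :
    perp2 (planeOfComplex z) = planeOfComplex (Complex.I * z) := by
  ext i
  fin_cases i <;> simp [perp2]

lemma K2_planeOfComplex (z : ℂ) :
    K2 (planeOfComplex z) = velocityOfComplex ((2 * π * Complex.I)⁻¹ • z⁻¹) := by
  rw [K2, perp2_planeOfComplex, velocityOfComplex_apply, LinearIsometryEquiv.norm_map, ← map_smul]
  congr 1
  have hconj : starRingEnd ℂ (2 * π * Complex.I)⁻¹ = (2 * π : ℝ)⁻¹ * Complex.I := by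
    simp [map_ofNat, mul_comm]
  rw [Complex.inv_def z, Complex.normSq_eq_norm_sq, smul_eq_mul, map_mul, hconj]
  simp only [Complex.real_smul, map_mul, Complex.conj_conj, Complex.conj_ofReal]
  push_cast
  ring

lemma circ_planeOfComplex (c : ℂ) (r α : ℝ) :
    circ (planeOfComplex c) r α = planeOfComplex (circleMap c r (2 * π * α)) := by
  ext i
  fin_cases i <;> simp [circ, circleMap, Complex.exp_re, Complex.exp_im]

lemma integral_comp_circ {E : Type*} [NormedAddCommGroup E] [NormedSpace ℝ E]
    (F : E2 → E) (c : ℂ) (r : ℝ) :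
    ∫ α in (0 : ℝ)..1, F (circ (planeOfComplex c) r α) =
      circleAverage (fun z ↦ F (planeOfComplex z)) c r := by
  simp only [circ_planeOfComplex]
  rw [intervalIntegral.integral_comp_mul_left (fun θ ↦ F (planeOfComplex (circleMap c r θ)))
    two_pi_pos.ne', mul_zero, mul_one, circleAverage_def]

lemma integral_K2_sub_circ {c w : ℂ} {r : ℝ} (hw : w ∉ sphere c |r|) :
    ∫ α in (0 : ℝ)..1, K2 (planeOfComplex w - circ (planeOfComplex c) r α) =
      velocityOfComplex ((2 * π * Complex.I)⁻¹ • circleAverage (fun z ↦ (w - z)⁻¹) c r) := by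
  rw [integral_comp_circ fun y ↦ K2 (planeOfComplex w - y)]
  simp only [← map_sub, K2_planeOfComplex]
  rw [← circleAverage_fun_smul]
  exact velocityOfComplex.circleAverage_comp_comm ((circleIntegrable_inv_sub hw).const_smul)

section VortexSheet

variable {x₀ x : E2} {r : ℝ}

theorem integral_K2_sub_circ_of_dist_lt (h : dist x x₀ < |r|) :
    ∫ α in (0 : ℝ)..1, K2 (x - circ x₀ r α) = 0 := by
  obtain ⟨c, rfl⟩ := planeOfComplex.surjective x₀
  obtain ⟨w, rfl⟩ := planeOfComplex.surjective x
  rw [planeOfComplex.dist_map] at h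
  rw [integral_K2_sub_circ h.ne, circleAverage_inv_sub_of_mem_ball h, smul_zero, map_zero]

theorem integral_K2_sub_circ_of_lt_dist (h : |r| < dist x x₀) :
    ∫ α in (0 : ℝ)..1, K2 (x - circ x₀ r α) = K2 (x - x₀) := by
  obtain ⟨c, rfl⟩ := planeOfComplex.surjective x₀
  obtain ⟨w, rfl⟩ := planeOfComplex.surjective x
  rw [planeOfComplex.dist_map] at h
  rw [integral_K2_sub_circ h.ne', circleAverage_inv_sub_of_notMem_closedBall h.not_ge, ← map_sub,
    K2_planeOfComplex]

end VortexSheet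

lemma two_pi_mul_smul_K2 (a : ℝ) (y : E2) : (2 * π * a) • K2 y = (a / ‖y‖ ^ 2) • perp2 y := by
  rw [K2, smul_smul, mul_inv, mul_mul_mul_comm, mul_inv_cancel₀ two_pi_pos.ne', one_mul,
    div_eq_mul_inv]

theorem stmt18 (x₀ : E2) (r g : ℝ) (hr : 0 < r) (x : E2) :
    (dist x x₀ < r → (2 * π * r * g) • (∫ α in (0:ℝ)..1, K2 (x - circ x₀ r α)) = 0) ∧
    (r < dist x x₀ → (2 * π * r * g) • (∫ α in (0:ℝ)..1, K2 (x - circ x₀ r α))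
      = (r * g / ‖x - x₀‖ ^ 2) • perp2 (x - x₀)) := by
  constructor
  · intro h
    rw [integral_K2_sub_circ_of_dist_lt (h.trans_le (le_abs_self r)), smul_zero]
  · intro h
    rw [← abs_of_pos hr] at h
    rw [integral_K2_sub_circ_of_lt_dist h, mul_assoc _ r g, two_pi_mul_smul_K2]

end
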